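/- Let (Ω,Σ,μ) be a probability space and φ : Ω → Ω a measure-preserving measurable transformation with Perron–Frobenius operator P on L¹(Ω,Σ,μ). Suppose that (Pⁿf) converges in L¹-norm for every f ∈ L¹(Ω,Σ,μ). Then for every A ∈ Σ, choosing Σ-measurable representatives f_n of Pⁿ(1_A) and a Σ_inv-measurable representative g of E(1_A | Σ_inv), one has μ( {f_n > 0} Δ {g > 0} ) → 0 as n → ∞; that is, the supports of Pⁿ(1_A) converge in the measure algebra to the support of E(1_A | Σ_inv). -/

import Mathlib

open MeasureTheory Filter Set Topology
open scoped symmDiff ENNReal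

/-- The σ-algebra of `φ`-invariant measurable sets. -/
def invAlg {Ω : Type*} (m : MeasurableSpace Ω) (φ : Ω → Ω) : MeasurableSpace Ω where
  MeasurableSet' A := m.MeasurableSet' A ∧ φ ⁻¹' A = A
  measurableSet_empty := ⟨m.measurableSet_empty, rfl⟩
  measurableSet_compl A hA := ⟨m.measurableSet_compl A hA.1, by
    rw [Set.preimage_compl, hA.2]⟩
  measurableSet_iUnion s hs := ⟨m.measurableSet_iUnion s fun i => (hs i).1, by
    simp only [Set.preimage_iUnion]
    exact Set.iUnion_congr fun i => (hs i).2⟩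

/-!
Over an invariant set every `Pⁿ f` has the same integral as `f`. A fixed point `k` of `P` maximises
`B ↦ ∫ x in B, k x ∂μ` both at `{k > 0}` and at `φ⁻¹' {k > 0}`; as the two sets have equal measure,
`{k > 0}` is invariant up to a null set. Applied to the difference of a fixed point and its
conditional expectation given the invariant σ-algebra, this shows that the two agree, so the limit
of `Pⁿ f` is the conditional expectation of `f`.

For `f ≥ 0` the support of `Pⁿ f` lies in that of its conditional expectation, which is the limit,
and convergence in measure prevents the support of the limit from exceeding that of `Pⁿ f` by more
than a vanishing amount.
-/

section Support

variable {Ω : Type*} {m m₀ : MeasurableSpace Ω} {μ : Measure Ω}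

theorem ofPred_pos_ae_le_of_setIntegral_le {k : Ω → ℝ} (hk : Integrable k μ) {B : Set Ω}
    (hB : NullMeasurableSet B μ) (h : ∫ x in {x | 0 < k x}, k x ∂μ ≤ ∫ x in B, k x ∂μ) :
    {x | 0 < k x} ≤ᵐ[μ] B := by
  set K := {x | 0 < k x}
  have hK : NullMeasurableSet K μ :=
    aestronglyMeasurable_const.nullMeasurableSet_lt hk.aestronglyMeasurable
  have hle : B.indicator k ≤ K.indicator k := fun x ↦ by
    by_cases hxB : x ∈ B <;> by_cases hxK : x ∈ K <;> simp only [hxB, hxK, indicator_of_mem,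
      indicator_of_notMem, not_false_eq_true, le_refl]
    · exact not_lt.1 hxK
    · exact le_of_lt hxK
  have heq : B.indicator k =ᵐ[μ] K.indicator k := by
    refine (integral_eq_iff_of_ae_le (hk.indicator₀ hB) (hk.indicator₀ hK)
      (Eventually.of_forall hle)).1 (le_antisymm ?_ ?_)
    · exact integral_mono (hk.indicator₀ hB) (hk.indicator₀ hK) hle
    · rwa [integral_indicator₀ hB, integral_indicator₀ hK]
  filter_upwards [heq] with x hx hxK
  by_contra hxB
  rw [indicator_of_notMem hxB, indicator_of_mem (show x ∈ K from hxK)] at hx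
  exact hx.not_lt hxK

theorem ofPred_pos_ae_le_ofPred_condExp_pos (hm : m ≤ m₀) [SigmaFinite (μ.trim hm)] {f : Ω → ℝ}
    (hf : Integrable f μ) (hf0 : 0 ≤ᵐ[μ] f) :
    {x | 0 < f x} ≤ᵐ[μ] {x | 0 < (μ[f|m]) x} := by
  have hG : MeasurableSet[m] {x | 0 < (μ[f|m]) x} :=
    stronglyMeasurable_const.measurableSet_lt stronglyMeasurable_condExp
  refine ofPred_pos_ae_le_of_setIntegral_le hf (hm _ hG).nullMeasurableSet ?_
  calc ∫ x in {x | 0 < f x}, f x ∂μ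
      ≤ ∫ x, f x ∂μ := setIntegral_le_integral hf hf0
    _ = ∫ x, (μ[f|m]) x ∂μ := (integral_condExp hm).symm
    _ = ∫ x in {x | 0 < (μ[f|m]) x}, (μ[f|m]) x ∂μ := by
        refine (setIntegral_eq_integral_of_ae_compl_eq_zero ?_).symm
        filter_upwards [condExp_nonneg hf0] with x hx hxG
        exact le_antisymm (not_lt.1 hxG) hx
    _ = ∫ x in {x | 0 < (μ[f|m]) x}, f x ∂μ := setIntegral_condExp hm hf hG

theorem condExp_ae_eq_of_forall_setIntegral_eq (hm : m ≤ m₀) [SigmaFinite (μ.trim hm)]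
    {E : Type*} [NormedAddCommGroup E] [NormedSpace ℝ E] [CompleteSpace E]
    {f g : Ω → E} (hf : Integrable f μ) (hg : Integrable g μ)
    (hfg : ∀ s, MeasurableSet[m] s → ∫ x in s, f x ∂μ = ∫ x in s, g x ∂μ) :
    μ[f|m] =ᵐ[μ] μ[g|m] :=
  ae_eq_condExp_of_forall_setIntegral_eq hm hg (fun _ _ _ ↦ integrable_condExp.integrableOn)
    (fun s hs _ ↦ (setIntegral_condExp hm hf hs).trans (hfg s hs))
    stronglyMeasurable_condExp.aestronglyMeasurable

theorem tendsto_measure_ofPred_pos_and_lt [IsFiniteMeasure μ] {g : Ω → ℝ} (hg : AEMeasurable g μ) :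
    Tendsto (fun ε ↦ μ {x | 0 < g x ∧ g x < ε}) (𝓝[>] 0) (𝓝 0) := by
  have hempty : ⋂ ε > (0 : ℝ), {x | 0 < g x ∧ g x < ε} = ∅ := by
    refine eq_empty_of_forall_notMem fun x hx ↦ ?_
    simp only [mem_iInter, mem_ofPred_eq] at hx
    exact lt_irrefl _ (hx (g x) (hx 1 one_pos).1).2
  have h := tendsto_measure_biInter_gt (μ := μ) (s := fun ε ↦ {x | 0 < g x ∧ g x < ε})
    (a := (0 : ℝ))
    (fun ε _ ↦ (nullMeasurableSet_lt aemeasurable_const hg).inter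
      (nullMeasurableSet_lt hg aemeasurable_const))
    (fun _ _ _ hij _ hx ↦ ⟨hx.1, hx.2.trans_le hij⟩) ⟨1, one_pos, measure_ne_top μ _⟩
  rwa [hempty, measure_empty] at h

theorem tendsto_measure_ofPred_pos_diff [IsFiniteMeasure μ] {ι : Type*}
    {l : Filter ι} {f : ι → Ω → ℝ} {g : Ω → ℝ} (hg : AEMeasurable g μ)
    (hfg : TendstoInMeasure μ f l g) :
    Tendsto (fun i ↦ μ ({x | 0 < g x} \ {x | 0 < f i x})) l (𝓝 0) := by
  refine ENNReal.tendsto_nhds_zero.2 fun δ hδ ↦ ?_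
  have hδ2 : 0 < δ / 2 := ENNReal.half_pos hδ.ne'
  obtain ⟨ε, hgε, hε⟩ : ∃ ε, μ {x | 0 < g x ∧ g x < ε} ≤ δ / 2 ∧ 0 < ε :=
    (((tendsto_measure_ofPred_pos_and_lt hg).eventually_le_const hδ2).and
      self_mem_nhdsWithin).exists
  have hsub : ∀ i, {x | 0 < g x} \ {x | 0 < f i x} ⊆
      {x | 0 < g x ∧ g x < ε} ∪ {x | ε ≤ dist (f i x) (g x)} := by
    rintro i x ⟨hgx, hfx⟩
    refine (lt_or_ge (g x) ε).imp (fun h ↦ ⟨hgx, h⟩) fun h ↦ ?_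
    have hfx0 : f i x ≤ 0 := not_lt.1 hfx
    calc ε ≤ g x - f i x := by linarith
      _ ≤ dist (f i x) (g x) := by rw [dist_comm]; exact le_abs_self _
  filter_upwards [(tendstoInMeasure_iff_dist.1 hfg ε hε).eventually_le_const hδ2] with i hi
  calc μ ({x | 0 < g x} \ {x | 0 < f i x})
      ≤ μ {x | 0 < g x ∧ g x < ε} + μ {x | ε ≤ dist (f i x) (g x)} :=
        (measure_mono (hsub i)).trans (measure_union_le _ _)
    _ ≤ δ := (add_le_add hgε hi).trans_eq (ENNReal.add_halves δ)

theorem tendsto_measure_ofPred_pos_symmDiff [IsFiniteMeasure μ] {ι : Type*} {l : Filter ι}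
    {f : ι → Ω → ℝ} {g : Ω → ℝ} (hg : AEMeasurable g μ) (hfg : TendstoInMeasure μ f l g)
    (hsub : ∀ i, {x | 0 < f i x} ≤ᵐ[μ] {x | 0 < g x}) :
    Tendsto (fun i ↦ μ ({x | 0 < f i x} ∆ {x | 0 < g x})) l (𝓝 0) := by
  refine (tendsto_measure_ofPred_pos_diff hg hfg).congr fun i ↦ measure_congr ?_
  filter_upwards [hsub i] with x hx
  exact propext ⟨fun h ↦ Or.inr h, fun h ↦ h.resolve_left fun hf ↦ hf.2 (hx hf.1)⟩

end Support

/-- `P` is the Perron–Frobenius (transfer) operator of `φ` on `L¹(μ)`, characterised by its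
integrals over measurable sets; `φ` is an arbitrary self-map. -/
def IsPerronFrobenius {Ω : Type*} [MeasurableSpace Ω] {μ : Measure Ω} (φ : Ω → Ω)
    (P : Lp ℝ 1 μ →L[ℝ] Lp ℝ 1 μ) : Prop :=
  ∀ (f : Lp ℝ 1 μ) (A : Set Ω), MeasurableSet A →
    ∫ x in A, (P f) x ∂μ = ∫ x in φ ⁻¹' A, f x ∂μ

namespace IsPerronFrobenius

open MeasurableSpace

variable {Ω : Type*} [MeasurableSpace Ω] {μ : Measure Ω} {φ : Ω → Ω} {P : Lp ℝ 1 μ →L[ℝ] Lp ℝ 1 μ}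

theorem apply_nonneg (hP : IsPerronFrobenius φ P) {f : Lp ℝ 1 μ} (hf : 0 ≤ f) : 0 ≤ P f := by
  rw [← Lp.coeFn_nonneg] at hf ⊢
  refine ae_nonneg_of_forall_setIntegral_nonneg (L1.integrable_coeFn _) fun s hs _ ↦ ?_
  rw [hP f s hs]
  exact setIntegral_nonneg_of_ae hf

theorem pow_apply_nonneg (hP : IsPerronFrobenius φ P) {f : Lp ℝ 1 μ} (hf : 0 ≤ f) (n : ℕ) :
    0 ≤ (P ^ n) f := by
  induction n with
  | zero => exact hf
  | succ n ih => rw [pow_succ']; exact hP.apply_nonneg ih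

theorem setIntegral_pow_apply (hP : IsPerronFrobenius φ P) (f : Lp ℝ 1 μ) {C : Set Ω}
    (hC : MeasurableSet[invariants φ] C) (n : ℕ) :
    ∫ x in C, ((P ^ n) f) x ∂μ = ∫ x in C, f x ∂μ := by
  induction n with
  | zero => rfl
  | succ n ih =>
    rw [pow_succ', mul_apply_eq_comp, hP _ C hC.1, hC.2, ih]

theorem apply_toL1_of_measurable_invariants (hP : IsPerronFrobenius φ P)
    (hmp : MeasurePreserving φ μ μ) {g : Ω → ℝ} (hgm : Measurable[invariants φ] g)
    (hg : Integrable g μ) : P (hg.toL1 g) = hg.toL1 g := by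
  refine Lp.ext (Integrable.ae_eq_of_forall_setIntegral_eq _ _ (L1.integrable_coeFn _)
    (L1.integrable_coeFn _) fun s hs _ ↦ ?_)
  calc ∫ x in s, P (hg.toL1 g) x ∂μ
      = ∫ x in φ ⁻¹' s, hg.toL1 g x ∂μ := hP _ s hs
    _ = ∫ x in φ ⁻¹' s, g (φ x) ∂μ := by
        rw [integral_congr_ae (ae_restrict_of_ae hg.coeFn_toL1)]
        exact congrArg (fun u ↦ ∫ x in φ ⁻¹' s, u x ∂μ) (comp_eq_of_measurable_invariants hgm).symm
    _ = ∫ x in s, g x ∂μ := by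
        rw [← setIntegral_map hs (hmp.map_eq.symm ▸ hg.aestronglyMeasurable) hmp.aemeasurable,
          hmp.map_eq]
    _ = ∫ x in s, hg.toL1 g x ∂μ := integral_congr_ae (ae_restrict_of_ae hg.coeFn_toL1.symm)

theorem ofPred_pow_apply_pos_ae_le (hP : IsPerronFrobenius φ P)
    [SigmaFinite (μ.trim (invariants_le φ))] {f : Lp ℝ 1 μ} (hf : 0 ≤ f) (n : ℕ) :
    {x | 0 < ((P ^ n) f) x} ≤ᵐ[μ] {x | 0 < (μ[f|invariants φ]) x} := by
  have hcond : μ[(P ^ n) f|invariants φ] =ᵐ[μ] μ[f|invariants φ] :=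
    condExp_ae_eq_of_forall_setIntegral_eq (invariants_le φ) (L1.integrable_coeFn _)
      (L1.integrable_coeFn f) fun C hC ↦ hP.setIntegral_pow_apply f hC n
  filter_upwards [hcond, ofPred_pos_ae_le_ofPred_condExp_pos (invariants_le φ)
    (L1.integrable_coeFn _) ((Lp.coeFn_nonneg _).2 (hP.pow_apply_nonneg hf n))] with x hx hpos hxn
  exact (hpos hxn).trans_eq hx

variable [IsFiniteMeasure μ]

theorem preimage_ofPred_pos_ae_eq (hP : IsPerronFrobenius φ P) (hmp : MeasurePreserving φ μ μ)
    {k : Lp ℝ 1 μ} (hk : P k = k) : φ ⁻¹' {x | 0 < k x} =ᵐ[μ] {x | 0 < k x} := by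
  have hK : MeasurableSet {x | 0 < k x} :=
    stronglyMeasurable_const.measurableSet_lt (Lp.stronglyMeasurable k)
  have hle : {x | 0 < k x} ≤ᵐ[μ] φ ⁻¹' {x | 0 < k x} := by
    refine ofPred_pos_ae_le_of_setIntegral_le (L1.integrable_coeFn k)
      (hmp.measurable hK).nullMeasurableSet (Eq.le ?_)
    rw [← hP k _ hK, hk]
  exact (ae_eq_of_ae_subset_of_measure_ge hle (hmp.measure_preimage hK.nullMeasurableSet).le
    hK.nullMeasurableSet (measure_ne_top _ _)).symm

theorem nonpos_of_setIntegral_invariants_eq_zero (hP : IsPerronFrobenius φ P)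
    (hmp : MeasurePreserving φ μ μ) {k : Lp ℝ 1 μ} (hk : P k = k)
    (hk0 : ∀ C, MeasurableSet[invariants φ] C → ∫ x in C, k x ∂μ = 0) : k ≤ 0 := by
  have hK : MeasurableSet {x | 0 < k x} :=
    stronglyMeasurable_const.measurableSet_lt (Lp.stronglyMeasurable k)
  obtain ⟨C, hC, hCK, hCinv⟩ := hmp.quasiMeasurePreserving.exists_preimage_eq_of_preimage_ae
    hK.nullMeasurableSet (hP.preimage_ofPred_pos_ae_eq hmp hk)
  have hzero : ∫ x in {x | 0 < k x}, k x ∂μ = 0 :=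
    (setIntegral_congr_set hCK).symm.trans (hk0 C ⟨hC, hCinv⟩)
  have hempty : {x | 0 < k x} ≤ᵐ[μ] (∅ : Set Ω) :=
    ofPred_pos_ae_le_of_setIntegral_le (L1.integrable_coeFn k) nullMeasurableSet_empty
      (by rw [hzero, setIntegral_empty])
  rw [← Lp.coeFn_le]
  filter_upwards [hempty, Lp.coeFn_zero ℝ 1 μ] with x hx hx0
  rw [hx0]
  exact not_lt.1 hx

theorem le_of_setIntegral_invariants_eq (hP : IsPerronFrobenius φ P)
    (hmp : MeasurePreserving φ μ μ) {f g : Lp ℝ 1 μ} (hf : P f = f) (hg : P g = g)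
    (hfg : ∀ C, MeasurableSet[invariants φ] C → ∫ x in C, f x ∂μ = ∫ x in C, g x ∂μ) : f ≤ g := by
  refine sub_nonpos.1 (hP.nonpos_of_setIntegral_invariants_eq_zero hmp
    (by rw [map_sub, hf, hg]) fun C hC ↦ ?_)
  rw [integral_congr_ae (ae_restrict_of_ae (Lp.coeFn_sub f g))]
  exact (integral_sub (L1.integrable_coeFn f).integrableOn
    (L1.integrable_coeFn g).integrableOn).trans (sub_eq_zero.2 (hfg C hC))

theorem ae_eq_condExp_of_apply_eq (hP : IsPerronFrobenius φ P) (hmp : MeasurePreserving φ μ μ)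
    {h : Lp ℝ 1 μ} (hh : P h = h) : h =ᵐ[μ] μ[h|invariants φ] := by
  have hg : Integrable (μ[h|invariants φ]) μ := integrable_condExp
  set e : Lp ℝ 1 μ := hg.toL1 _
  have he : P e = e :=
    hP.apply_toL1_of_measurable_invariants hmp stronglyMeasurable_condExp.measurable hg
  have heC : ∀ C, MeasurableSet[invariants φ] C → ∫ x in C, e x ∂μ = ∫ x in C, h x ∂μ :=
    fun C hC ↦ (integral_congr_ae (ae_restrict_of_ae hg.coeFn_toL1)).trans
      (setIntegral_condExp (invariants_le φ) (L1.integrable_coeFn h) hC)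
  have heq : h = e :=
    le_antisymm (hP.le_of_setIntegral_invariants_eq hmp hh he fun C hC ↦ (heC C hC).symm)
      (hP.le_of_setIntegral_invariants_eq hmp he hh heC)
  exact (Lp.ext_iff.1 heq).trans hg.coeFn_toL1

theorem ae_eq_condExp_of_tendsto_pow (hP : IsPerronFrobenius φ P) (hmp : MeasurePreserving φ μ μ)
    {f h : Lp ℝ 1 μ} (hconv : Tendsto (fun n : ℕ ↦ (P ^ n) f) atTop (𝓝 h)) :
    h =ᵐ[μ] μ[f|invariants φ] := by
  have hfixed : P h = h := isFixedPt_of_tendsto_iterate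
    (by simpa only [FunLike.coe_pow_eq_iterate] using hconv) P.continuous.continuousAt
  refine (hP.ae_eq_condExp_of_apply_eq hmp hfixed).trans
    (condExp_ae_eq_of_forall_setIntegral_eq (invariants_le φ) (L1.integrable_coeFn h)
      (L1.integrable_coeFn f) fun C hC ↦ ?_)
  exact tendsto_nhds_unique (((continuous_setIntegral C).tendsto h).comp hconv)
    (tendsto_const_nhds.congr fun n ↦ (hP.setIntegral_pow_apply f hC n).symm)

end IsPerronFrobenius

theorem invAlg_eq_invariants {Ω : Type*} [m : MeasurableSpace Ω] (φ : Ω → Ω) :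
    invAlg m φ = MeasurableSpace.invariants φ :=
  rfl

theorem stmt15_general {Ω : Type*} [m : MeasurableSpace Ω] {μ : Measure Ω} [IsFiniteMeasure μ]
    {φ : Ω → Ω} (hmp : MeasurePreserving φ μ μ) {P : Lp ℝ 1 μ →L[ℝ] Lp ℝ 1 μ}
    (hP : IsPerronFrobenius φ P) {f : Ω → ℝ} (hf : Integrable f μ) (hf0 : 0 ≤ᵐ[μ] f)
    (hconv : ∃ h : Lp ℝ 1 μ, Tendsto (fun n : ℕ ↦ (P ^ n) (hf.toL1 f)) atTop (𝓝 h)) :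
    Tendsto (fun n : ℕ ↦
        μ ({x | 0 < ((P ^ n) (hf.toL1 f)) x} ∆ {x | 0 < (μ[f|invAlg m φ]) x}))
      atTop (𝓝 0) := by
  rw [invAlg_eq_invariants]
  obtain ⟨h, hh⟩ := hconv
  have hcond : μ[hf.toL1 f|MeasurableSpace.invariants φ] =ᵐ[μ]
      μ[f|MeasurableSpace.invariants φ] :=
    condExp_congr_ae hf.coeFn_toL1
  have hlim : h =ᵐ[μ] μ[f|MeasurableSpace.invariants φ] :=
    (hP.ae_eq_condExp_of_tendsto_pow hmp hh).trans hcond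
  refine tendsto_measure_ofPred_pos_symmDiff integrable_condExp.aemeasurable
    ((tendstoInMeasure_of_tendsto_Lp hh).congr_right hlim) fun n ↦ ?_
  have hfL1 : 0 ≤ hf.toL1 f := (Lp.coeFn_nonneg _).1 (hf0.trans_eq hf.coeFn_toL1.symm)
  filter_upwards [hP.ofPred_pow_apply_pos_ae_le hfL1 n, hcond] with x hx hxf hpos
  exact (hx hpos).trans_eq hxf

theorem stmt15 {Ω : Type*} [m : MeasurableSpace Ω] (μ : Measure Ω) [IsProbabilityMeasure μ]
    (φ : Ω → Ω) (hmp : MeasurePreserving φ μ μ)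
    (P : Lp ℝ 1 μ →L[ℝ] Lp ℝ 1 μ)
    (hP : ∀ (f : Lp ℝ 1 μ) (A : Set Ω), MeasurableSet A →
      ∫ x in A, (P f) x ∂μ = ∫ x in φ ⁻¹' A, f x ∂μ)
    (hconv : ∀ f : Lp ℝ 1 μ, ∃ g : Lp ℝ 1 μ, Tendsto (fun n : ℕ => (P ^ n) f) atTop (𝓝 g))
    (A : Set Ω) (hA : MeasurableSet A) :
    Tendsto (fun n : ℕ =>
        μ ({x | 0 < ((P ^ n) (indicatorConstLp 1 hA (measure_ne_top μ A) (1 : ℝ))) x}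
          ∆ {x | 0 < (μ[A.indicator (fun _ => (1 : ℝ))|invAlg m φ]) x}))
      atTop (𝓝 0) := by
  exact stmt15_general hmp hP ((integrable_const 1).indicator hA)
    (Eventually.of_forall (indicator_nonneg fun _ _ ↦ zero_le_one)) (hconv _)
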